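/- In the setting of Theorem 6 with Δ := δ√T · I_s for some δ > 0 (so that Ψ := (X₁ − ED₀)Y₁P₁⁻¹, Ξ := (X₁ − ED₀)G₂, the robust Lyapunov inequality holds, and the perturbed closed loop is x⁺ = Ψ x + Ξ Q(x) + E d with |d(t)| ≤ δ for all t ≥ 0 and ‖D₀‖₂ ≤ δ√T), let V(x) := xᵀP₁⁻¹x, 𝒳 := {x : ℓ(x) + g(x, δ) ≤ 0}, ℛ_γ := {x : V(x) ≤ γ} for an arbitrary γ > 0, and 𝒵 := ℛ_γ ∩ 𝒳ᶜ. If V(x) + ℓ(x) + g(x, δ) ≤ γ for all x ∈ 𝒵, then ℛ_γ is robustly positively invariant: for every x(0) ∈ ℛ_γ and every disturbance sequence with |d(t)| ≤ δ for all t, the solution satisfies x(t) ∈ ℛ_γ for all t ≥ 0. (Theorem 7: robustly positively invariant set.) -/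

import Mathlib

open Matrix Filter Topology

noncomputable def euclNorm {ι : Type*} [Fintype ι] (v : ι → ℝ) : ℝ :=
  Real.sqrt (∑ i, v i ^ 2)

noncomputable def spec2Norm {ι κ : Type*} [Fintype ι] [Fintype κ]
    (M : Matrix ι κ ℝ) : ℝ :=
  sSup ((fun v => euclNorm (M *ᵥ v)) '' {v | euclNorm v ≤ 1})

def LoewnerLE {ι : Type*} [Fintype ι] (X Y : Matrix ι ι ℝ) : Prop :=
  (Y - X).PosSemidef

def NegDef {ι : Type*} [Fintype ι] (M : Matrix ι ι ℝ) : Prop :=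
  (-M).PosDef

/-- The data-based bound `ℓ(x)` of inequality (34). -/
noncomputable def ellFun {n s s' p T : ℕ}
    (X₁ : Matrix (Fin n) (Fin T) ℝ) (E : Matrix (Fin n) (Fin s) ℝ)
    (Δ : Matrix (Fin s) (Fin s') ℝ) (P₁ Ω : Matrix (Fin n) (Fin n) ℝ)
    (G₁ : Matrix (Fin T) (Fin n) ℝ) (G₂ : Matrix (Fin T) (Fin p) ℝ)
    (Q : (Fin n → ℝ) → Fin p → ℝ) (x : Fin n → ℝ) : ℝ :=
  - (x ⬝ᵥ ((P₁⁻¹ * Ω * P₁⁻¹) *ᵥ x))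
  + (((2:ℝ) • ((X₁ * G₁) *ᵥ x) + (X₁ * G₂) *ᵥ Q x) ⬝ᵥ (P₁⁻¹ *ᵥ ((X₁ * G₂) *ᵥ Q x)))
  + spec2Norm Δ
      * euclNorm (((2:ℝ) • ((X₁ * G₁) *ᵥ x) + (X₁ * G₂) *ᵥ Q x) ᵥ* (P₁⁻¹ * E))
      * euclNorm (G₂ *ᵥ Q x)
  + spec2Norm Δ * euclNorm ((2:ℝ) • (G₁ *ᵥ x) + G₂ *ᵥ Q x)
      * euclNorm ((Eᵀ * P₁⁻¹ * X₁ * G₂) *ᵥ Q x)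
  + spec2Norm Δ ^ 2 * spec2Norm (Eᵀ * P₁⁻¹ * E)
      * euclNorm ((2:ℝ) • (G₁ *ᵥ x) + G₂ *ᵥ Q x) * euclNorm (G₂ *ᵥ Q x)

/-- The disturbance term `g(x, δ) = r₁(x)δ + r₂(x)δ + r₃δ²` of (35)-(36). -/
noncomputable def gFun {n s s' p T : ℕ}
    (X₁ : Matrix (Fin n) (Fin T) ℝ) (E : Matrix (Fin n) (Fin s) ℝ)
    (Δ : Matrix (Fin s) (Fin s') ℝ) (P₁ : Matrix (Fin n) (Fin n) ℝ)
    (G₁ : Matrix (Fin T) (Fin n) ℝ) (G₂ : Matrix (Fin T) (Fin p) ℝ)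
    (Q : (Fin n → ℝ) → Fin p → ℝ) (δ : ℝ) (x : Fin n → ℝ) : ℝ :=
  2 * euclNorm (((X₁ * G₁) *ᵥ x + (X₁ * G₂) *ᵥ Q x) ᵥ* (P₁⁻¹ * E)) * δ
  + 2 * spec2Norm Δ * spec2Norm (Eᵀ * P₁⁻¹ * E)
      * euclNorm (G₁ *ᵥ x + G₂ *ᵥ Q x) * δ
  + spec2Norm (Eᵀ * P₁⁻¹ * E) * δ ^ 2

/-!
Write `N = X₁ - E D₀`, so that the closed loop is `x⁺ = N a + N b + E d` with `a = G₁ x`,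
`b = G₂ Q(x)`, and put `w = 2a + b`. Expanding the quadratic form `V` twice with
`V(u + v) = V(u) + (2u + v)ᵀ P₁⁻¹ v` gives

`V(x⁺) = V(N a) + (N w)ᵀ P₁⁻¹ (N b) + (2 N (a + b) + E d)ᵀ P₁⁻¹ E d`.

The Lyapunov inequality bounds the first term by `V(x) - xᵀ P₁⁻¹ Ω P₁⁻¹ x`. The unknown `D₀` enters
the other two only through `D₀ w`, `D₀ b` and `D₀ (a + b)`; the Cauchy-Schwarz inequality and
`‖D₀‖ ≤ ‖Δ‖` bound them by `ℓ₁ + ℓ₂ + ℓ₃ + ℓ₄` and `g`. Hence `V(x⁺) ≤ V(x) + ℓ(x) + g(x, δ)`.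
-/

section Norms

open scoped Matrix.Norms.L2Operator

variable {ι κ : Type*} [Fintype ι] [Fintype κ]

theorem euclNorm_eq_norm_toLp (v : ι → ℝ) : euclNorm v = ‖WithLp.toLp 2 v‖ := by
  simp [euclNorm, EuclideanSpace.norm_eq]

theorem euclNorm_nonneg (v : ι → ℝ) : 0 ≤ euclNorm v :=
  Real.sqrt_nonneg _

theorem euclNorm_sq (v : ι → ℝ) : euclNorm v ^ 2 = v ⬝ᵥ v := by
  rw [euclNorm_eq_norm_toLp, ← real_inner_self_eq_norm_sq, EuclideanSpace.inner_toLp_toLp,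
    star_trivial]

theorem euclNorm_smul (c : ℝ) (v : ι → ℝ) : euclNorm (c • v) = |c| * euclNorm v := by
  simp only [euclNorm_eq_norm_toLp, WithLp.toLp_smul, norm_smul, Real.norm_eq_abs]

theorem abs_dotProduct_le_euclNorm_mul (v w : ι → ℝ) :
    |v ⬝ᵥ w| ≤ euclNorm v * euclNorm w := by
  simpa only [euclNorm_eq_norm_toLp, EuclideanSpace.inner_toLp_toLp, star_trivial,
    dotProduct_comm w v] using
    abs_real_inner_le_norm (WithLp.toLp 2 v) (WithLp.toLp 2 w)

theorem spec2Norm_eq_l2_opNorm [DecidableEq κ] (M : Matrix ι κ ℝ) : spec2Norm M = ‖M‖ := by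
  rw [l2_opNorm_def, ← ContinuousLinearMap.sSup_unitClosedBall_eq_norm, spec2Norm]
  congr 1
  ext r
  simp only [Set.mem_image, Set.mem_ofPred_eq, mem_closedBall_zero_iff, euclNorm_eq_norm_toLp]
  rw [(WithLp.toLp_surjective 2).exists]
  rfl

theorem spec2Norm_nonneg (M : Matrix ι κ ℝ) : 0 ≤ spec2Norm M := by
  classical
  rw [spec2Norm_eq_l2_opNorm]
  exact norm_nonneg _

theorem spec2Norm_transpose (M : Matrix ι κ ℝ) : spec2Norm Mᵀ = spec2Norm M := by
  classical
  rw [spec2Norm_eq_l2_opNorm, spec2Norm_eq_l2_opNorm, ← conjTranspose_eq_transpose_of_trivial,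
    l2_opNorm_conjTranspose]

theorem euclNorm_mulVec_le (M : Matrix ι κ ℝ) (v : κ → ℝ) :
    euclNorm (M *ᵥ v) ≤ spec2Norm M * euclNorm v := by
  classical
  rw [spec2Norm_eq_l2_opNorm, euclNorm_eq_norm_toLp, euclNorm_eq_norm_toLp]
  exact l2_opNorm_mulVec M (WithLp.toLp 2 v)

theorem euclNorm_mulVec_le_of_spec2Norm_le {M : Matrix ι κ ℝ} {μ : ℝ} (hM : spec2Norm M ≤ μ)
    (v : κ → ℝ) : euclNorm (M *ᵥ v) ≤ μ * euclNorm v :=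
  (euclNorm_mulVec_le M v).trans (mul_le_mul_of_nonneg_right hM (euclNorm_nonneg v))

theorem spec2Norm_le_of_euclNorm_mulVec_le {M : Matrix ι κ ℝ} {μ : ℝ} (hμ : 0 ≤ μ)
    (hM : ∀ v, euclNorm (M *ᵥ v) ≤ μ * euclNorm v) : spec2Norm M ≤ μ := by
  refine Real.sSup_le ?_ hμ
  rintro _ ⟨v, hv, rfl⟩
  exact (hM v).trans (mul_le_of_le_one_right hμ hv)

theorem abs_dotProduct_le_of_euclNorm_le {v w : ι → ℝ} {q r : ℝ} (hv : euclNorm v ≤ q)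
    (hw : euclNorm w ≤ r) : |v ⬝ᵥ w| ≤ q * r :=
  (abs_dotProduct_le_euclNorm_mul v w).trans
    (mul_le_mul hv hw (euclNorm_nonneg w) ((euclNorm_nonneg v).trans hv))

theorem abs_dotProduct_mulVec_le_of_euclNorm_le (M : Matrix ι κ ℝ) {v : ι → ℝ} {w : κ → ℝ}
    {q r : ℝ} (hv : euclNorm v ≤ q) (hw : euclNorm w ≤ r) :
    |v ⬝ᵥ (M *ᵥ w)| ≤ spec2Norm M * q * r := by
  refine (abs_dotProduct_le_of_euclNorm_le hv ((euclNorm_mulVec_le M w).trans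
    (mul_le_mul_of_nonneg_left hw (spec2Norm_nonneg M)))).trans_eq ?_
  ring

end Norms

theorem mulVec_dotProduct {ι κ α : Type*} [Fintype ι] [Fintype κ] [CommSemiring α]
    (M : Matrix ι κ α) (v : κ → α) (w : ι → α) : (M *ᵥ v) ⬝ᵥ w = v ⬝ᵥ (Mᵀ *ᵥ w) := by
  rw [dotProduct_mulVec, vecMul_transpose]

section LoewnerOrder

variable {ι κ κ' : Type*} [Fintype ι] [Fintype κ] [Fintype κ']

theorem dotProduct_mul_transpose_mulVec_self (M : Matrix ι κ ℝ) (y : ι → ℝ) :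
    y ⬝ᵥ ((M * Mᵀ) *ᵥ y) = euclNorm (Mᵀ *ᵥ y) ^ 2 := by
  rw [euclNorm_sq, mulVec_dotProduct, transpose_transpose, mulVec_mulVec]

theorem loewnerLE_mul_transpose_iff {M : Matrix ι κ ℝ} {N : Matrix ι κ' ℝ} :
    LoewnerLE (M * Mᵀ) (N * Nᵀ) ↔ ∀ y, euclNorm (Mᵀ *ᵥ y) ≤ euclNorm (Nᵀ *ᵥ y) := by
  have hherm : (N * Nᵀ - M * Mᵀ).IsHermitian := by
    simp [IsHermitian, conjTranspose_eq_transpose_of_trivial]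
  rw [LoewnerLE, posSemidef_iff_dotProduct_mulVec, and_iff_right hherm]
  refine forall_congr' fun y => ?_
  rw [star_trivial, sub_mulVec, dotProduct_sub, dotProduct_mul_transpose_mulVec_self,
    dotProduct_mul_transpose_mulVec_self, sub_nonneg,
    sq_le_sq₀ (euclNorm_nonneg _) (euclNorm_nonneg _)]

theorem spec2Norm_le_of_loewnerLE {M : Matrix ι κ ℝ} {N : Matrix ι κ' ℝ}
    (h : LoewnerLE (M * Mᵀ) (N * Nᵀ)) : spec2Norm M ≤ spec2Norm N := by
  rw [← spec2Norm_transpose M, ← spec2Norm_transpose N]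
  exact spec2Norm_le_of_euclNorm_mulVec_le (spec2Norm_nonneg _) fun y =>
    (loewnerLE_mul_transpose_iff.1 h y).trans (euclNorm_mulVec_le _ y)

theorem loewnerLE_smul_one_of_spec2Norm_le [DecidableEq ι] {M : Matrix ι κ ℝ} {c : ℝ}
    (h : spec2Norm M ≤ c) :
    LoewnerLE (M * Mᵀ) ((c • (1 : Matrix ι ι ℝ)) * (c • (1 : Matrix ι ι ℝ))ᵀ) := by
  refine loewnerLE_mul_transpose_iff.2 fun y => ?_
  rw [transpose_smul, transpose_one, smul_mulVec, one_mulVec, euclNorm_smul]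
  exact euclNorm_mulVec_le_of_spec2Norm_le
    ((spec2Norm_transpose M).trans_le (h.trans (le_abs_self c))) y

theorem NegDef.loewnerLE_zero {M : Matrix ι ι ℝ} (h : NegDef M) : LoewnerLE M 0 := by
  rw [LoewnerLE, zero_sub]
  exact PosDef.posSemidef h

end LoewnerOrder

section QuadraticForm

variable {ι κ σ : Type*} [Fintype ι] [Fintype κ] [Fintype σ]

theorem dotProduct_mulVec_add_self {α : Type*} [CommSemiring α] {R : Matrix ι ι α} (hR : R.IsSymm)
    (u v : ι → α) :
    (u + v) ⬝ᵥ (R *ᵥ (u + v)) = u ⬝ᵥ (R *ᵥ u) + ((2 : α) • u + v) ⬝ᵥ (R *ᵥ v) := by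
  have hswap : v ⬝ᵥ (R *ᵥ u) = u ⬝ᵥ (R *ᵥ v) := by
    rw [dotProduct_comm, mulVec_dotProduct, hR.eq]
  simp only [mulVec_add, add_dotProduct, dotProduct_add, smul_dotProduct, smul_eq_mul, hswap]
  ring

theorem dotProduct_inv_mulVec_le_of_loewnerLE [DecidableEq ι] {P Ω : Matrix ι ι ℝ}
    (hPsymm : P.IsSymm) (hPdet : IsUnit P.det) {Y : Matrix κ ι ℝ} {N : Matrix ι κ ℝ}
    (h : LoewnerLE (Yᵀ * Nᵀ * P⁻¹ * (N * Y) - P + Ω) 0) (x : ι → ℝ) :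
    (N *ᵥ ((Y * P⁻¹) *ᵥ x)) ⬝ᵥ (P⁻¹ *ᵥ (N *ᵥ ((Y * P⁻¹) *ᵥ x))) ≤
      x ⬝ᵥ (P⁻¹ *ᵥ x) - x ⬝ᵥ ((P⁻¹ * Ω * P⁻¹) *ᵥ x) := by
  have hinv : P⁻¹ᵀ = P⁻¹ := by rw [transpose_nonsing_inv, hPsymm.eq]
  have hcongr : P⁻¹ * (0 - (Yᵀ * Nᵀ * P⁻¹ * (N * Y) - P + Ω)) * P⁻¹ =
      P⁻¹ - P⁻¹ * Ω * P⁻¹ - (N * (Y * P⁻¹))ᵀ * P⁻¹ * (N * (Y * P⁻¹)) := by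
    simp only [transpose_mul, hinv, zero_sub, neg_mul, mul_neg, mul_add, add_mul, mul_sub,
      sub_mul, Matrix.mul_assoc, mul_nonsing_inv P hPdet, Matrix.mul_one]
    abel
  have hnonneg : 0 ≤ x ⬝ᵥ
      ((P⁻¹ * (0 - (Yᵀ * Nᵀ * P⁻¹ * (N * Y) - P + Ω)) * P⁻¹) *ᵥ x) := by
    simpa only [star_trivial, mulVec_dotProduct, hinv, mulVec_mulVec, ← Matrix.mul_assoc] using
      h.dotProduct_mulVec_nonneg (P⁻¹ *ᵥ x)
  rw [hcongr, sub_mulVec, sub_mulVec, dotProduct_sub, dotProduct_sub] at hnonneg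
  rw [mulVec_mulVec, mulVec_dotProduct, mulVec_mulVec, mulVec_mulVec]
  linarith

theorem sub_mul_mulVec_dotProduct_le (R : Matrix ι ι ℝ) (X : Matrix ι κ ℝ) (E : Matrix ι σ ℝ)
    {D : Matrix σ κ ℝ} {μ : ℝ} (hD : spec2Norm D ≤ μ) (w b : κ → ℝ) :
    ((X - E * D) *ᵥ w) ⬝ᵥ (R *ᵥ ((X - E * D) *ᵥ b)) ≤
      (X *ᵥ w) ⬝ᵥ (R *ᵥ (X *ᵥ b))
      + μ * euclNorm ((X *ᵥ w) ᵥ* (R * E)) * euclNorm b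
      + μ * euclNorm w * euclNorm ((Eᵀ * R * X) *ᵥ b)
      + μ ^ 2 * spec2Norm (Eᵀ * R * E) * euclNorm w * euclNorm b := by
  have hDw := euclNorm_mulVec_le_of_spec2Norm_le hD w
  have hDb := euclNorm_mulVec_le_of_spec2Norm_le hD b
  have hexpand : ((X - E * D) *ᵥ w) ⬝ᵥ (R *ᵥ ((X - E * D) *ᵥ b)) =
      (X *ᵥ w) ⬝ᵥ (R *ᵥ (X *ᵥ b)) - ((X *ᵥ w) ᵥ* (R * E)) ⬝ᵥ (D *ᵥ b)
      - (D *ᵥ w) ⬝ᵥ ((Eᵀ * R * X) *ᵥ b) + (D *ᵥ w) ⬝ᵥ ((Eᵀ * R * E) *ᵥ (D *ᵥ b)) := by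
    simp only [← dotProduct_mulVec, ← mulVec_mulVec, ← mulVec_dotProduct, sub_mulVec,
      sub_dotProduct, mulVec_sub, dotProduct_sub]
    ring
  have hXD := neg_le_of_abs_le
    (abs_dotProduct_le_of_euclNorm_le (le_refl (euclNorm ((X *ᵥ w) ᵥ* (R * E)))) hDb)
  have hDX := neg_le_of_abs_le
    (abs_dotProduct_le_of_euclNorm_le hDw (le_refl (euclNorm ((Eᵀ * R * X) *ᵥ b))))
  have hDD := le_of_abs_le (abs_dotProduct_mulVec_le_of_euclNorm_le (Eᵀ * R * E) hDw hDb)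
  linarith

theorem two_smul_sub_mul_mulVec_add_dotProduct_le (R : Matrix ι ι ℝ) (X : Matrix ι κ ℝ)
    (E : Matrix ι σ ℝ) {D : Matrix σ κ ℝ} {μ δ : ℝ} (hD : spec2Norm D ≤ μ) (u : κ → ℝ)
    {d : σ → ℝ} (hd : euclNorm d ≤ δ) :
    ((2 : ℝ) • ((X - E * D) *ᵥ u) + E *ᵥ d) ⬝ᵥ (R *ᵥ (E *ᵥ d)) ≤
      2 * euclNorm ((X *ᵥ u) ᵥ* (R * E)) * δ
      + 2 * μ * spec2Norm (Eᵀ * R * E) * euclNorm u * δ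
      + spec2Norm (Eᵀ * R * E) * δ ^ 2 := by
  have hexpand : ((2 : ℝ) • ((X - E * D) *ᵥ u) + E *ᵥ d) ⬝ᵥ (R *ᵥ (E *ᵥ d)) =
      2 * (((X *ᵥ u) ᵥ* (R * E)) ⬝ᵥ d) - 2 * ((D *ᵥ u) ⬝ᵥ ((Eᵀ * R * E) *ᵥ d))
      + d ⬝ᵥ ((Eᵀ * R * E) *ᵥ d) := by
    simp only [← dotProduct_mulVec, ← mulVec_mulVec, ← mulVec_dotProduct, sub_mulVec,
      sub_dotProduct, add_dotProduct, smul_dotProduct, smul_eq_mul]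
    ring
  have hXd := le_of_abs_le
    (abs_dotProduct_le_of_euclNorm_le (le_refl (euclNorm ((X *ᵥ u) ᵥ* (R * E)))) hd)
  have hDd := neg_le_of_abs_le (abs_dotProduct_mulVec_le_of_euclNorm_le (Eᵀ * R * E)
    (euclNorm_mulVec_le_of_spec2Norm_le hD u) hd)
  have hdd := le_of_abs_le (abs_dotProduct_mulVec_le_of_euclNorm_le (Eᵀ * R * E) hd hd)
  linarith

end QuadraticForm

section Invariance

/-- A set `S` of states is robustly positively invariant for `x⁺ = f(x, d)` with respect to a set
`𝒟` of admissible disturbances if no trajectory that starts in `S` and is driven by disturbances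
in `𝒟` leaves `S`. For the disturbance bound `δ` of the paper, `𝒟` is the ball `|d| ≤ δ`. -/
def RobustlyPositivelyInvariant {α β : Type*} (f : α → β → α) (𝒟 : Set β) (S : Set α) : Prop :=
  ∀ (x : ℕ → α) (d : ℕ → β), (∀ t, d t ∈ 𝒟) → (∀ t, x (t + 1) = f (x t) (d t)) →
    x 0 ∈ S → ∀ t, x t ∈ S

theorem RobustlyPositivelyInvariant.of_mapsTo {α β : Type*} {f : α → β → α} {𝒟 : Set β}
    {S : Set α} (h : ∀ x ∈ S, ∀ d ∈ 𝒟, f x d ∈ S) : RobustlyPositivelyInvariant f 𝒟 S := by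
  intro x d hd hx hx0 t
  induction t with
  | zero => exact hx0
  | succ t ih => exact hx t ▸ h (x t) ih (d t) (hd t)

theorem RobustlyPositivelyInvariant.sublevel {α β : Type*} {f : α → β → α} {𝒟 : Set β}
    {V φ : α → ℝ} {γ : ℝ} (hstep : ∀ x, ∀ d ∈ 𝒟, V (f x d) ≤ V x + φ x)
    (hφ : ∀ x, V x ≤ γ → 0 < φ x → V x + φ x ≤ γ) :
    RobustlyPositivelyInvariant f 𝒟 {x | V x ≤ γ} := by
  refine .of_mapsTo fun x (hx : V x ≤ γ) d hd => (hstep x d hd).trans ?_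
  rcases le_or_gt (φ x) 0 with hle | hpos
  · exact (add_le_of_nonpos_right hle).trans hx
  · exact hφ x hx hpos

end Invariance

section ClosedLoop

variable {n p s s' T : ℕ} {E : Matrix (Fin n) (Fin s) ℝ} {Q : (Fin n → ℝ) → Fin p → ℝ}
  {X₁ : Matrix (Fin n) (Fin T) ℝ} {D₀ : Matrix (Fin s) (Fin T) ℝ}
  {Δ : Matrix (Fin s) (Fin s') ℝ} {P₁ Ω : Matrix (Fin n) (Fin n) ℝ}
  {Y₁ : Matrix (Fin T) (Fin n) ℝ} {G₂ : Matrix (Fin T) (Fin p) ℝ}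
  {G₁ : Matrix (Fin T) (Fin n) ℝ} {δ γ : ℝ}

theorem lyapunov_closedLoop_le (hD₀ : spec2Norm D₀ ≤ spec2Norm Δ) (hP₁symm : P₁.IsSymm)
    (hP₁det : IsUnit P₁.det)
    (hlyap : LoewnerLE (Y₁ᵀ * (X₁ - E * D₀)ᵀ * P₁⁻¹ * ((X₁ - E * D₀) * Y₁) - P₁ + Ω) 0)
    (hG₁ : G₁ = Y₁ * P₁⁻¹) (x : Fin n → ℝ) {d : Fin s → ℝ} (hd : euclNorm d ≤ δ) :
    (((X₁ - E * D₀) * G₁) *ᵥ x + ((X₁ - E * D₀) * G₂) *ᵥ Q x + E *ᵥ d) ⬝ᵥ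
        (P₁⁻¹ *ᵥ (((X₁ - E * D₀) * G₁) *ᵥ x + ((X₁ - E * D₀) * G₂) *ᵥ Q x + E *ᵥ d)) ≤
      x ⬝ᵥ (P₁⁻¹ *ᵥ x) +
        (ellFun X₁ E Δ P₁ Ω G₁ G₂ Q x + gFun X₁ E Δ P₁ G₁ G₂ Q δ x) := by
  have hinv : P₁⁻¹.IsSymm := by rw [IsSymm, transpose_nonsing_inv, hP₁symm.eq]
  have hlinear := dotProduct_inv_mulVec_le_of_loewnerLE hP₁symm hP₁det hlyap x
  have hnonlinear := sub_mul_mulVec_dotProduct_le P₁⁻¹ X₁ E hD₀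
    ((2 : ℝ) • (G₁ *ᵥ x) + G₂ *ᵥ Q x) (G₂ *ᵥ Q x)
  have hdisturbance := two_smul_sub_mul_mulVec_add_dotProduct_le P₁⁻¹ X₁ E hD₀
    (G₁ *ᵥ x + G₂ *ᵥ Q x) hd
  rw [dotProduct_mulVec_add_self hinv, dotProduct_mulVec_add_self hinv, ellFun, gFun]
  rw [← hG₁] at hlinear
  simp only [mulVec_add, mulVec_smul, mulVec_mulVec] at hlinear hnonlinear hdisturbance ⊢
  linarith

theorem robustly_positively_invariant_set_general (hD₀ : spec2Norm D₀ ≤ spec2Norm Δ)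
    (hP₁symm : P₁.IsSymm) (hP₁det : IsUnit P₁.det)
    (hlyap : LoewnerLE (Y₁ᵀ * (X₁ - E * D₀)ᵀ * P₁⁻¹ * ((X₁ - E * D₀) * Y₁) - P₁ + Ω) 0)
    (hG₁ : G₁ = Y₁ * P₁⁻¹)
    (hZ : ∀ x : Fin n → ℝ, x ⬝ᵥ (P₁⁻¹ *ᵥ x) ≤ γ →
      0 < ellFun X₁ E Δ P₁ Ω G₁ G₂ Q x + gFun X₁ E Δ P₁ G₁ G₂ Q δ x →
      x ⬝ᵥ (P₁⁻¹ *ᵥ x) + ellFun X₁ E Δ P₁ Ω G₁ G₂ Q x + gFun X₁ E Δ P₁ G₁ G₂ Q δ x ≤ γ) :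
    RobustlyPositivelyInvariant
      (fun x d => ((X₁ - E * D₀) * G₁) *ᵥ x + ((X₁ - E * D₀) * G₂) *ᵥ Q x + E *ᵥ d)
      {d | euclNorm d ≤ δ} {x | x ⬝ᵥ (P₁⁻¹ *ᵥ x) ≤ γ} :=
  .sublevel (fun x _ hd => lyapunov_closedLoop_le hD₀ hP₁symm hP₁det hlyap hG₁ x hd)
    fun x hx hpos => (add_assoc _ _ _).symm.trans_le (hZ x hx hpos)

end ClosedLoop

/-- Theorem 7 (robustly positively invariant set). -/
theorem robustly_positively_invariant_set
    {n m p s T : ℕ}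
    (A : Matrix (Fin n) (Fin n ⊕ Fin p) ℝ) (B : Matrix (Fin n) (Fin m) ℝ)
    (E : Matrix (Fin n) (Fin s) ℝ)
    (Q : (Fin n → ℝ) → Fin p → ℝ)
    (U₀ : Matrix (Fin m) (Fin T) ℝ) (Z₀ : Matrix (Fin n ⊕ Fin p) (Fin T) ℝ)
    (X₁ : Matrix (Fin n) (Fin T) ℝ) (D₀ : Matrix (Fin s) (Fin T) ℝ)
    (hdata : X₁ = A * Z₀ + B * U₀ + E * D₀)
    (δ : ℝ) (hδ : 0 < δ)
    (Δ : Matrix (Fin s) (Fin s) ℝ)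
    (hΔ : Δ = (δ * Real.sqrt T) • (1 : Matrix (Fin s) (Fin s) ℝ))
    (hD₀norm : spec2Norm D₀ ≤ δ * Real.sqrt T)
    (P₁ : Matrix (Fin n) (Fin n) ℝ) (hP₁symm : P₁.IsSymm) (hP₁ : P₁.PosDef)
    (Ω : Matrix (Fin n) (Fin n) ℝ) (hΩsymm : Ω.IsSymm) (hΩ : Ω.PosDef)
    (Y₁ : Matrix (Fin T) (Fin n) ℝ) (G₂ : Matrix (Fin T) (Fin p) ℝ)
    -- the robust Lyapunov inequality:
    (hrob : ∀ D : Matrix (Fin s) (Fin T) ℝ, LoewnerLE (D * Dᵀ) (Δ * Δᵀ) →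
      NegDef (Y₁ᵀ * (X₁ - E * D)ᵀ * P₁⁻¹ * ((X₁ - E * D) * Y₁) - P₁ + Ω))
    (G₁ : Matrix (Fin T) (Fin n) ℝ) (hG₁ : G₁ = Y₁ * P₁⁻¹)
    (Ψ : Matrix (Fin n) (Fin n) ℝ) (hΨ : Ψ = (X₁ - E * D₀) * G₁)
    (Ξ : Matrix (Fin n) (Fin p) ℝ) (hΞ : Ξ = (X₁ - E * D₀) * G₂)
    (V : (Fin n → ℝ) → ℝ) (hV : ∀ x, V x = x ⬝ᵥ (P₁⁻¹ *ᵥ x))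
    (γ : ℝ) (hγ : 0 < γ)
    -- V(x) + ℓ(x) + g(x,δ) ≤ γ for all x ∈ 𝒵 = ℛ_γ ∩ 𝒳ᶜ:
    (hZ : ∀ x : Fin n → ℝ, V x ≤ γ →
      0 < ellFun X₁ E Δ P₁ Ω G₁ G₂ Q x + gFun X₁ E Δ P₁ G₁ G₂ Q δ x →
      V x + ellFun X₁ E Δ P₁ Ω G₁ G₂ Q x + gFun X₁ E Δ P₁ G₁ G₂ Q δ x ≤ γ) :
    -- then ℛ_γ is robustly positively invariant:
    ∀ (x : ℕ → Fin n → ℝ) (d : ℕ → Fin s → ℝ),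
      (∀ t, euclNorm (d t) ≤ δ) →
      (∀ t, x (t + 1) = Ψ *ᵥ x t + Ξ *ᵥ Q (x t) + E *ᵥ d t) →
      V (x 0) ≤ γ → ∀ t, V (x t) ≤ γ := by
  obtain rfl : V = fun x => x ⬝ᵥ (P₁⁻¹ *ᵥ x) := funext hV
  subst hΨ hΞ
  have hLoewner : LoewnerLE (D₀ * D₀ᵀ) (Δ * Δᵀ) := hΔ ▸ loewnerLE_smul_one_of_spec2Norm_le hD₀norm
  exact robustly_positively_invariant_set_general (spec2Norm_le_of_loewnerLE hLoewner) hP₁symm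
    ((isUnit_iff_isUnit_det P₁).1 hP₁.isUnit) (hrob D₀ hLoewner).loewnerLE_zero hG₁ hZ
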